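/- Let X and Y be Hermitian n×n matrices and Z = X + Y, with eigenvalues of each matrix ordered decreasingly. Then for all indices with n ≥ t ≥ j ≥ 1, λ_t(Z) ≤ λ_j(X) + λ_{t-j+1}(Y), and for n ≥ j ≥ t ≥ 1, λ_t(Z) ≥ λ_j(X) + λ_{t-j+n}(Y). -/

import Mathlib

lemma exists_ne_zero_orth {n : ℕ} (b₁ b₂ b₃ : Fin n → EuclideanSpace ℂ (Fin n))
    (S₁ S₂ S₃ : Finset (Fin n)) (h : S₁.card + S₂.card + S₃.card < n) :
    ∃ x : EuclideanSpace ℂ (Fin n), x ≠ 0 ∧ (∀ i ∈ S₁, inner ℂ (b₁ i) x = 0) ∧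
      (∀ i ∈ S₂, inner ℂ (b₂ i) x = 0) ∧ (∀ i ∈ S₃, inner ℂ (b₃ i) x = 0) := by
  let L : EuclideanSpace ℂ (Fin n) →ₗ[ℂ] ((S₁ → ℂ) × (S₂ → ℂ)) × (S₃ → ℂ) :=
    ((LinearMap.pi fun i : S₁ => (innerSL ℂ (b₁ i)).toLinearMap).prod
      (LinearMap.pi fun i : S₂ => (innerSL ℂ (b₂ i)).toLinearMap)).prod
      (LinearMap.pi fun i : S₃ => (innerSL ℂ (b₃ i)).toLinearMap)
  have hk : LinearMap.ker L ≠ ⊥ := by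
    apply LinearMap.ker_ne_bot_of_finrank_lt
    simpa using h
  obtain ⟨x, hx, hx0⟩ := Submodule.exists_mem_ne_zero_of_ne_bot hk
  refine ⟨x, hx0, ?_⟩
  have hL : L x = 0 := hx
  have h1 : ∀ i : S₁, (L x).1.1 i = 0 := by rw [hL]; intro i; rfl
  have h2 : ∀ i : S₂, (L x).1.2 i = 0 := by rw [hL]; intro i; rfl
  have h3 : ∀ i : S₃, (L x).2 i = 0 := by rw [hL]; intro i; rfl
  exact ⟨fun i hi => h1 ⟨i, hi⟩, fun i hi => h2 ⟨i, hi⟩, fun i hi => h3 ⟨i, hi⟩⟩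

lemma exists_basis_form {n : ℕ} (A : Matrix (Fin n) (Fin n) ℂ) (hA : A.IsHermitian)
    (m : Fin n → ℝ) (em : ∃ e : Equiv.Perm (Fin n), m = hA.eigenvalues ∘ e) :
    ∃ b : OrthonormalBasis (Fin n) ℂ (EuclideanSpace ℂ (Fin n)),
      ∀ x, (inner ℂ x (Matrix.toEuclideanLin A x)).re = ∑ i, m i * ‖inner ℂ (b i) x‖ ^ 2 := by
  obtain ⟨e, rfl⟩ := em
  refine ⟨hA.eigenvectorBasis.reindex e.symm, fun x => ?_⟩
  have hs := Matrix.isSymmetric_toEuclideanLin_iff.mpr hA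
  set b := hA.eigenvectorBasis.reindex e.symm with hb
  have hT : ∀ i, Matrix.toEuclideanLin A (b i) = ((hA.eigenvalues (e i) : ℝ) : ℂ) • b i := by
    intro i
    have := hA.mulVec_eigenvectorBasis (e i)
    simp only [hb, OrthonormalBasis.reindex_apply, Equiv.symm_symm]
    apply WithLp.ofLp_injective 2
    simpa using! this
  rw [← b.sum_inner_mul_inner, Complex.re_sum]
  refine Finset.sum_congr rfl fun i _ => ?_
  rw [← hs, hT, inner_smul_left, Complex.conj_ofReal, mul_left_comm, Complex.re_ofReal_mul,
    ← inner_conj_symm x (b i), mul_comm ((starRingEnd ℂ) _), Complex.mul_conj,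
    Complex.ofReal_re, Complex.normSq_eq_norm_sq]
  rfl

lemma form_le {n : ℕ} (b : OrthonormalBasis (Fin n) ℂ (EuclideanSpace ℂ (Fin n)))
    (m : Fin n → ℝ) (S : Finset (Fin n)) (c : ℝ) (hc : ∀ i ∉ S, m i ≤ c)
    (x : EuclideanSpace ℂ (Fin n)) (hx : ∀ i ∈ S, inner ℂ (b i) x = 0) :
    ∑ i, m i * ‖inner ℂ (b i) x‖ ^ 2 ≤ c * ‖x‖ ^ 2 := by
  rw [← b.sum_sq_norm_inner_right x, Finset.mul_sum]
  refine Finset.sum_le_sum fun i _ => ?_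
  by_cases hi : i ∈ S
  · simp [hx i hi]
  · exact mul_le_mul_of_nonneg_right (hc i hi) (by positivity)

lemma le_form {n : ℕ} (b : OrthonormalBasis (Fin n) ℂ (EuclideanSpace ℂ (Fin n)))
    (m : Fin n → ℝ) (S : Finset (Fin n)) (c : ℝ) (hc : ∀ i ∉ S, c ≤ m i)
    (x : EuclideanSpace ℂ (Fin n)) (hx : ∀ i ∈ S, inner ℂ (b i) x = 0) :
    c * ‖x‖ ^ 2 ≤ ∑ i, m i * ‖inner ℂ (b i) x‖ ^ 2 := by
  rw [← b.sum_sq_norm_inner_right x, Finset.mul_sum]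
  refine Finset.sum_le_sum fun i _ => ?_
  by_cases hi : i ∈ S
  · simp [hx i hi]
  · exact mul_le_mul_of_nonneg_right (hc i hi) (by positivity)

/-- **Weyl's inequalities** for the eigenvalues of a sum of Hermitian matrices.
`μ`, `ν`, `ξ` are the eigenvalues of `X`, `Y`, `Z = X + Y` in non-increasing order,
indexed by `Fin n` (so the `i`-th largest eigenvalue, 1-based, is the value at index
`i - 1`). -/
theorem stmt_5 {n : ℕ} (X Y : Matrix (Fin n) (Fin n) ℂ)
    (hX : X.IsHermitian) (hY : Y.IsHermitian) (hZ : (X + Y).IsHermitian)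
    (μ ν ξ : Fin n → ℝ) (hμ : Antitone μ) (hν : Antitone ν) (hξ : Antitone ξ)
    (eμ : ∃ e : Equiv.Perm (Fin n), μ = hX.eigenvalues ∘ e)
    (eν : ∃ e : Equiv.Perm (Fin n), ν = hY.eigenvalues ∘ e)
    (eξ : ∃ e : Equiv.Perm (Fin n), ξ = hZ.eigenvalues ∘ e) :
    (∀ (t j : ℕ) (h1 : 1 ≤ j) (h2 : j ≤ t) (h3 : t ≤ n),
        ξ ⟨t - 1, by omega⟩ ≤ μ ⟨j - 1, by omega⟩ + ν ⟨t - j, by omega⟩) ∧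
      (∀ (t j : ℕ) (h1 : 1 ≤ t) (h2 : t ≤ j) (h3 : j ≤ n),
        ξ ⟨t - 1, by omega⟩ ≥ μ ⟨j - 1, by omega⟩ + ν ⟨n - 1 - (j - t), by omega⟩) := by
  obtain ⟨b₁, f₁⟩ := exists_basis_form X hX μ eμ
  obtain ⟨b₂, f₂⟩ := exists_basis_form Y hY ν eν
  obtain ⟨b₃, f₃⟩ := exists_basis_form (X + Y) hZ ξ eξ
  have hadd : ∀ x : EuclideanSpace ℂ (Fin n), ∑ i, ξ i * ‖inner ℂ (b₃ i) x‖ ^ 2 =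
      ∑ i, μ i * ‖inner ℂ (b₁ i) x‖ ^ 2 + ∑ i, ν i * ‖inner ℂ (b₂ i) x‖ ^ 2 := by
    intro x
    rw [← f₁, ← f₂, ← f₃, map_add, LinearMap.add_apply, inner_add_right, Complex.add_re]
  constructor
  · intro t j h1 h2 h3
    obtain ⟨x, hx0, hx1, hx2, hx3⟩ := exists_ne_zero_orth b₁ b₂ b₃
      (Finset.Iio ⟨j - 1, by omega⟩) (Finset.Iio ⟨t - j, by omega⟩)
      (Finset.Ioi ⟨t - 1, by omega⟩) (by simp only [Fin.card_Iio, Fin.card_Ioi]; omega)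
    have k1 := form_le b₁ μ _ (μ ⟨j - 1, by omega⟩) (fun i hi => hμ (by simpa using hi)) x hx1
    have k2 := form_le b₂ ν _ (ν ⟨t - j, by omega⟩) (fun i hi => hν (by simpa using hi)) x hx2
    have k3 := le_form b₃ ξ _ (ξ ⟨t - 1, by omega⟩) (fun i hi => hξ (by simpa using hi)) x hx3
    have hp : 0 < ‖x‖ ^ 2 := by positivity
    refine le_of_mul_le_mul_right ?_ hp
    rw [hadd] at k3
    linarith
  · intro t j h1 h2 h3
    obtain ⟨x, hx0, hx1, hx2, hx3⟩ := exists_ne_zero_orth b₁ b₂ b₃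
      (Finset.Ioi ⟨j - 1, by omega⟩) (Finset.Ioi ⟨n - 1 - (j - t), by omega⟩)
      (Finset.Iio ⟨t - 1, by omega⟩) (by simp only [Fin.card_Iio, Fin.card_Ioi]; omega)
    have k1 := le_form b₁ μ _ (μ ⟨j - 1, by omega⟩) (fun i hi => hμ (by simpa using hi)) x hx1
    have k2 := le_form b₂ ν _ (ν ⟨n - 1 - (j - t), by omega⟩)
      (fun i hi => hν (by simpa using hi)) x hx2
    have k3 := form_le b₃ ξ _ (ξ ⟨t - 1, by omega⟩) (fun i hi => hξ (by simpa using hi)) x hx3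
    have hp : 0 < ‖x‖ ^ 2 := by positivity
    refine le_of_mul_le_mul_right ?_ hp
    rw [hadd] at k3
    linarith
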